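/- Let (H, g) be a finite type unimodular pivotal Hopf G-coalgebra over a field k, let μ be a right G-integral for H, and let μ̃_α(x) := μ_α(g_α x) be its symmetrised right G-integral. Then there exists a unique right modified trace t on H-pmod such that t_{H_α}(f) = μ̃_α(f(1_α)) for every α ∈ G and every H_α-linear endomorphism f of the left regular module H_α. -/

import Mathlib

/-!
Write `μ̃_γ(x) = μ_γ(g_γ x)`. A linear form on an algebra that is symmetric, `τ(xy) = τ(yx)`, extends
to a cyclic trace on finitely generated projective modules by `f ↦ ∑ i, τ(aᵢ(f bᵢ))` for any dual
basis `(aᵢ, bᵢ)`, and cyclicity forces this formula. This gives uniqueness at once, and reduces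
existence to the symmetry of `μ̃` and the partial trace property.

Symmetry (`symmetrised_comm`) comes from unimodularity. For a two-sided cointegral `Λ ∈ H₁` and
`Δ(Λ) = Λ₁ ⊗ Λ₂ ∈ H_γ ⊗ H_{γ⁻¹}` one has `Λ₁ h ⊗ Λ₂ = Λ₁ ⊗ Λ₂ S(h)` and
`Λ₁ ⊗ h Λ₂ = S(h) Λ₁ ⊗ Λ₂`. Together with `μ_γ(Λ₁) Λ₂ = μ₁(Λ) 1`, these show that
`μ_γ(Λ₁ h) Λ₂` and `μ_γ(S²(h) Λ₁) Λ₂` both equal `μ₁(Λ) S(h)`. The map `f ↦ f(Λ₁) Λ₂` is injective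
(`eq_zero_of_slice_eq_zero`), so `μ_γ(x h) = μ_γ(S²(h) x)`, and `S²` is conjugation by the pivot.

For the partial trace, `x ⊗ w ↦ x₁ ⊗ x₂ w` is an isomorphism of `H_{αβ} ⊗ W`, with action on the
first factor only, onto `H_α ⊗ W`, with inverse `y ⊗ w ↦ y₁ ⊗ S(y₂) w`. Hence a dual basis of `P`
and a basis of `W` give a dual basis of `P ⊗ W` (`tensorCoord_dualBasis`). Computing the trace of
`P ⊗ W` in it, the partial trace property holds term by term, by the identity
`μ̃_{αβ}(u₁) S(u₂) = μ̃_α(u) g_β` (`symmetrised_cop`), which is the integral property twisted by the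
group-like family `g`.
-/

open scoped TensorProduct

/-- Transport along an equality of indices, as an algebra isomorphism. -/
def castAlg (k : Type) [CommSemiring k] {G : Type} {H : G → Type}
    [∀ γ : G, Ring (H γ)] [∀ γ : G, Algebra k (H γ)]
    {γ γ' : G} (h : γ = γ') : H γ ≃ₐ[k] H γ' := by
  subst h; exact AlgEquiv.refl

/-- A Hopf `G`-coalgebra over a field `k`. -/
structure HopfGCoalgebra (k G : Type) [Field k] [Group G] (H : G → Type)
    [∀ γ : G, Ring (H γ)] [∀ γ : G, Algebra k (H γ)] where
  Δ : ∀ α β : G, H (α * β) →ₐ[k] (H α ⊗[k] H β)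
  ε : H (1 : G) →ₐ[k] k
  S : ∀ γ : G, H γ →ₗ[k] H γ⁻¹
  coassoc : ∀ (α β γ : G) (x : H (α * β * γ)),
    (TensorProduct.map (Δ α β).toLinearMap LinearMap.id) (Δ (α * β) γ x)
      = (TensorProduct.assoc k (H α) (H β) (H γ)).symm
          ((TensorProduct.map LinearMap.id (Δ β γ).toLinearMap)
            (Δ α (β * γ) (castAlg k (mul_assoc α β γ) x)))
  counit_right : ∀ (α : G) (x : H (α * 1)),
    (TensorProduct.rid k (H α)) ((TensorProduct.map LinearMap.id ε.toLinearMap) (Δ α 1 x))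
      = castAlg k (mul_one α) x
  counit_left : ∀ (α : G) (x : H (1 * α)),
    (TensorProduct.lid k (H α)) ((TensorProduct.map ε.toLinearMap LinearMap.id) (Δ 1 α x))
      = castAlg k (one_mul α) x
  antipode_left : ∀ (α : G) (x : H (α⁻¹ * α)),
    (LinearMap.mul' k (H α))
      ((TensorProduct.map ((castAlg k (inv_inv α)).toLinearMap ∘ₗ S α⁻¹) LinearMap.id)
        (Δ α⁻¹ α x))
      = ε (castAlg k (inv_mul_cancel α) x) • 1
  antipode_right : ∀ (α : G) (x : H (α * α⁻¹)),
    (LinearMap.mul' k (H α))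
      ((TensorProduct.map LinearMap.id ((castAlg k (inv_inv α)).toLinearMap ∘ₗ S α⁻¹))
        (Δ α α⁻¹ x))
      = ε (castAlg k (mul_inv_cancel α) x) • 1

namespace HopfGCoalgebra

variable {k G : Type} [Field k] [Group G] {H : G → Type}
  [∀ γ : G, Ring (H γ)] [∀ γ : G, Algebra k (H γ)]

/-- A family of linear forms is a right `G`-integral. -/
def IsRightIntegral (D : HopfGCoalgebra k G H) (μ : ∀ γ : G, H γ →ₗ[k] k) : Prop :=
  ∀ (α β : G) (x : H (α * β)),
    (TensorProduct.lid k (H β)) ((TensorProduct.map (μ α) LinearMap.id) (D.Δ α β x))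
      = μ (α * β) x • 1

/-- A family of linear forms is a left `G`-integral. -/
def IsLeftIntegral (D : HopfGCoalgebra k G H) (μ : ∀ γ : G, H γ →ₗ[k] k) : Prop :=
  ∀ (α β : G) (x : H (α * β)),
    (TensorProduct.rid k (H α)) ((TensorProduct.map LinearMap.id (μ β)) (D.Δ α β x))
      = μ (α * β) x • 1

/-- A family of invertible elements is a pivot. -/
structure IsPivot (D : HopfGCoalgebra k G H) (g : ∀ γ : G, (H γ)ˣ) : Prop where
  delta : ∀ α β : G, D.Δ α β (g (α * β) : H (α * β)) = (g α : H α) ⊗ₜ[k] (g β : H β)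
  counit : D.ε (g 1 : H 1) = 1
  antipode : ∀ (α : G) (x : H α),
    castAlg k (inv_inv α) (D.S α⁻¹ (D.S α x)) = (g α : H α) * x * ((g α)⁻¹ : (H α)ˣ)

/-- `H` is unimodular if `H₁` admits a nonzero two-sided cointegral. -/
def IsUnimodular (D : HopfGCoalgebra k G H) : Prop :=
  ∃ Λ : H 1, Λ ≠ 0 ∧ ∀ h : H 1, h * Λ = D.ε h • Λ ∧ Λ * h = D.ε h • Λ

/-- A `G`-comodulus for a right `G`-integral `μ`. -/
structure IsComodulus (D : HopfGCoalgebra k G H) (μ : ∀ γ : G, H γ →ₗ[k] k)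
    (a : ∀ γ : G, (H γ)ˣ) : Prop where
  delta : ∀ α β : G, D.Δ α β (a (α * β) : H (α * β)) = (a α : H α) ⊗ₜ[k] (a β : H β)
  counit : D.ε (a 1 : H 1) = 1
  rel : ∀ (α β : G) (x : H (α * β)),
    (TensorProduct.rid k (H α)) ((TensorProduct.map LinearMap.id (μ β)) (D.Δ α β x))
      = μ (α * β) x • (a α : H α)

end HopfGCoalgebra

namespace HopfGCoalgebra

variable {k G : Type} [Field k] [Group G] {H : G → Type}
  [∀ γ : G, Ring (H γ)] [∀ γ : G, Algebra k (H γ)]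

/-- The trivial `H₁`-module structure on a `k`-vector space, `h • w = ε(h) • w`. -/
def trivialModule (D : HopfGCoalgebra k G H) (W : Type) [AddCommGroup W] [Module k W] :
    Module (H (1 : G)) W :=
  Module.compHom W D.ε.toRingHom

theorem trivialModuleTower (D : HopfGCoalgebra k G H) (W : Type) [AddCommGroup W]
    [Module k W] :
    letI := D.trivialModule W
    IsScalarTower k (H (1 : G)) W := by
  letI := D.trivialModule W
  refine ⟨fun c h w => ?_⟩
  show D.ε (c • h) • w = c • (D.ε h • w)
  rw [map_smul, smul_eq_mul, mul_smul]

/-- The representation of `H_γ` (for `γ = αβ`) on `P ⊗ W` obtained from an `H_α`-module `P`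
and an `H_β`-module `W` through the coproduct `Δ_{α,β}`. -/
noncomputable def deltaRep (D : HopfGCoalgebra k G H) (α β γ : G) (hγ : γ = α * β)
    (P W : Type) [AddCommGroup P] [Module k P] [Module (H α) P] [IsScalarTower k (H α) P]
    [AddCommGroup W] [Module k W] [Module (H β) W] [IsScalarTower k (H β) W] :
    H γ →ₐ[k] Module.End k (P ⊗[k] W) :=
  (Module.endTensorEndAlgHom.comp
      (Algebra.TensorProduct.map (Algebra.lsmul k k P) (Algebra.lsmul k k W))).comp
    ((D.Δ α β).comp (castAlg k hγ).toAlgHom)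

/-- The `H_γ`-module structure on `P ⊗ W` (for `γ = αβ`) induced by `Δ_{α,β}`. -/
noncomputable def tensorModule (D : HopfGCoalgebra k G H) (α β γ : G) (hγ : γ = α * β)
    (P W : Type) [AddCommGroup P] [Module k P] [Module (H α) P] [IsScalarTower k (H α) P]
    [AddCommGroup W] [Module k W] [Module (H β) W] [IsScalarTower k (H β) W] :
    Module (H γ) (P ⊗[k] W) :=
  Module.compHom (P ⊗[k] W) (D.deltaRep α β γ hγ P W).toRingHom

theorem tensorModuleTower (D : HopfGCoalgebra k G H) (α β γ : G) (hγ : γ = α * β)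
    (P W : Type) [AddCommGroup P] [Module k P] [Module (H α) P] [IsScalarTower k (H α) P]
    [AddCommGroup W] [Module k W] [Module (H β) W] [IsScalarTower k (H β) W] :
    letI := D.tensorModule α β γ hγ P W
    IsScalarTower k (H γ) (P ⊗[k] W) := by
  letI := D.tensorModule α β γ hγ P W
  refine ⟨fun c h x => ?_⟩
  show (D.deltaRep α β γ hγ P W (c • h)) x = c • (D.deltaRep α β γ hγ P W h) x
  rw [map_smul]
  rfl

/-- The right partial trace `tr^r_W(f)` of a `k`-linear map `f : P ⊗ W → P ⊗ W`, computed
with the duality morphisms of the pivotal structure (`gβ` is the pivot in degree `β`). -/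
noncomputable def trR (β : G) (P W : Type)
    [AddCommGroup P] [Module k P]
    [AddCommGroup W] [Module k W] [Module (H β) W] [IsScalarTower k (H β) W]
    [FiniteDimensional k W]
    (gβ : H β) (f : (P ⊗[k] W) →ₗ[k] (P ⊗[k] W)) : P →ₗ[k] P :=
  (TensorProduct.rid k P).toLinearMap
    ∘ₗ TensorProduct.map LinearMap.id
        (contractRight k W ∘ₗ TensorProduct.map (Algebra.lsmul k k W gβ) LinearMap.id)
    ∘ₗ (TensorProduct.assoc k P W (Module.Dual k W)).toLinearMap
    ∘ₗ TensorProduct.map f LinearMap.id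
    ∘ₗ (TensorProduct.assoc k P W (Module.Dual k W)).symm.toLinearMap
    ∘ₗ TensorProduct.map LinearMap.id (coevaluation k W)
    ∘ₗ (TensorProduct.rid k P).symm.toLinearMap

/-- The left partial trace `tr^l_W(f)` of a `k`-linear map `f : W ⊗ P → W ⊗ P`, computed
with the duality morphisms of the pivotal structure (`gβinv` is the inverse of the pivot in
degree `β`). -/
noncomputable def trL (β : G) (W P : Type)
    [AddCommGroup P] [Module k P]
    [AddCommGroup W] [Module k W] [Module (H β) W] [IsScalarTower k (H β) W]
    [FiniteDimensional k W]
    (gβinv : H β) (f : (W ⊗[k] P) →ₗ[k] (W ⊗[k] P)) : P →ₗ[k] P :=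
  (TensorProduct.lid k P).toLinearMap
    ∘ₗ TensorProduct.map (contractLeft k W) LinearMap.id
    ∘ₗ (TensorProduct.assoc k (Module.Dual k W) W P).symm.toLinearMap
    ∘ₗ TensorProduct.map LinearMap.id f
    ∘ₗ (TensorProduct.assoc k (Module.Dual k W) W P).toLinearMap
    ∘ₗ TensorProduct.map
        ((TensorProduct.comm k W (Module.Dual k W)).toLinearMap
          ∘ₗ TensorProduct.map (Algebra.lsmul k k W gβinv) LinearMap.id
          ∘ₗ coevaluation k W)
        LinearMap.id
    ∘ₗ (TensorProduct.lid k P).symm.toLinearMap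

end HopfGCoalgebra

/-- The data of a `k`-linear form on `End_{H_γ}(P)` for every `γ ∈ G` and every
finite-dimensional projective `H_γ`-module `P`. -/
abbrev TraceData (k G : Type) [Field k] [Group G] (H : G → Type)
    [∀ γ : G, Ring (H γ)] [∀ γ : G, Algebra k (H γ)] : Type 1 :=
  ∀ (γ : G) (P : Type) [AddCommGroup P] [Module k P] [Module (H γ) P]
    [IsScalarTower k (H γ) P] [FiniteDimensional k P] [Module.Projective (H γ) P],
    (P →ₗ[H γ] P) →ₗ[k] k

namespace HopfGCoalgebra

variable {k G : Type} [Field k] [Group G] {H : G → Type}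
  [∀ γ : G, Ring (H γ)] [∀ γ : G, Algebra k (H γ)]

/-- A cyclic trace on `H`-pmod. -/
def IsCyclicTrace (t : TraceData k G H) : Prop :=
  ∀ (γ : G) (P Q : Type)
    [AddCommGroup P] [Module k P] [Module (H γ) P] [IsScalarTower k (H γ) P]
    [FiniteDimensional k P] [Module.Projective (H γ) P]
    [AddCommGroup Q] [Module k Q] [Module (H γ) Q] [IsScalarTower k (H γ) Q]
    [FiniteDimensional k Q] [Module.Projective (H γ) Q]
    (f : P →ₗ[H γ] Q) (g : Q →ₗ[H γ] P),
    t γ P (g.comp f) = t γ Q (f.comp g)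

/-- The right partial trace property of a trace `t`:
`t_{P⊗W}(f) = t_P(tr^r_W(f))` for every projective `H_α`-module `P`, finite-dimensional
`H_β`-module `W`, and `H_{αβ}`-linear endomorphism `f` of `P ⊗ W`. -/
def HasRightPartialTraceProperty (D : HopfGCoalgebra k G H) (g : ∀ γ : G, (H γ)ˣ)
    (t : TraceData k G H) : Prop :=
  ∀ (α β : G) (P W : Type)
    [AddCommGroup P] [Module k P] [Module (H α) P] [IsScalarTower k (H α) P]
    [FiniteDimensional k P] [Module.Projective (H α) P]
    [AddCommGroup W] [Module k W] [Module (H β) W] [IsScalarTower k (H β) W]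
    [FiniteDimensional k W],
    letI := D.tensorModule α β (α * β) rfl P W
    haveI := D.tensorModuleTower α β (α * β) rfl P W
    ∀ [Module.Projective (H (α * β)) (P ⊗[k] W)]
      (f : (P ⊗[k] W) →ₗ[H (α * β)] (P ⊗[k] W)) (f' : P →ₗ[H α] P),
      f'.restrictScalars k = trR β P W (g β : H β) (f.restrictScalars k) →
      t (α * β) (P ⊗[k] W) f = t α P f'

/-- The left partial trace property of a trace `t`:
`t_{W⊗P}(f) = t_P(tr^l_W(f))` for every projective `H_α`-module `P`, finite-dimensional
`H_β`-module `W`, and `H_{βα}`-linear endomorphism `f` of `W ⊗ P`. -/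
def HasLeftPartialTraceProperty (D : HopfGCoalgebra k G H) (g : ∀ γ : G, (H γ)ˣ)
    (t : TraceData k G H) : Prop :=
  ∀ (α β : G) (P W : Type)
    [AddCommGroup P] [Module k P] [Module (H α) P] [IsScalarTower k (H α) P]
    [FiniteDimensional k P] [Module.Projective (H α) P]
    [AddCommGroup W] [Module k W] [Module (H β) W] [IsScalarTower k (H β) W]
    [FiniteDimensional k W],
    letI := D.tensorModule β α (β * α) rfl W P
    haveI := D.tensorModuleTower β α (β * α) rfl W P
    ∀ [Module.Projective (H (β * α)) (W ⊗[k] P)]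
      (f : (W ⊗[k] P) →ₗ[H (β * α)] (W ⊗[k] P)) (f' : P →ₗ[H α] P),
      f'.restrictScalars k = trL β W P (((g β)⁻¹ : (H β)ˣ) : H β) (f.restrictScalars k) →
      t (β * α) (W ⊗[k] P) f = t α P f'

/-- A right modified trace on `H`-pmod. -/
def IsRightModifiedTrace (D : HopfGCoalgebra k G H) (g : ∀ γ : G, (H γ)ˣ)
    (t : TraceData k G H) : Prop :=
  IsCyclicTrace t ∧ D.HasRightPartialTraceProperty g t

/-- A left modified trace on `H`-pmod. -/
def IsLeftModifiedTrace (D : HopfGCoalgebra k G H) (g : ∀ γ : G, (H γ)ˣ)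
    (t : TraceData k G H) : Prop :=
  IsCyclicTrace t ∧ D.HasLeftPartialTraceProperty g t

end HopfGCoalgebra

namespace HopfGCoalgebra

/-! ### Structure maps with free indices -/

section FreeIndices

variable {k G : Type} [Field k] [Group G] {H : G → Type}
  [∀ γ : G, Ring (H γ)] [∀ γ : G, Algebra k (H γ)] (D : HopfGCoalgebra k G H)

/-- The coproduct `H_γ → H_α ⊗ H_β`, indexed by a proof that `γ = αβ` so that all products in `G`
may be replaced by free variables. -/
def cop {α β γ : G} (h : γ = α * β) : H γ →ₐ[k] H α ⊗[k] H β :=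
  (D.Δ α β).comp (castAlg k h).toAlgHom

/-- The antipode `H_α → H_{α'}`, indexed by a proof that `α' = α⁻¹`. -/
def anti {α α' : G} (h : α' = α⁻¹) : H α →ₗ[k] H α' :=
  (castAlg k h.symm).toLinearMap ∘ₗ D.S α

theorem castAlg_cast {γ γ' : G} (h : γ = γ') (h' : γ' = γ) (x : H γ) :
    castAlg k h' (castAlg k h x) = x := by
  subst h; rfl

theorem cop_coassoc {α β γ ab bc t : G} (h1 : ab = α * β) (h2 : t = ab * γ)
    (h3 : bc = β * γ) (h4 : t = α * bc) (x : H t) :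
    TensorProduct.map (D.cop h1).toLinearMap LinearMap.id (D.cop h2 x)
      = (TensorProduct.assoc k (H α) (H β) (H γ)).symm
          (TensorProduct.map LinearMap.id (D.cop h3).toLinearMap (D.cop h4 x)) := by
  subst h1 h3 h2
  exact D.coassoc α β γ x

theorem cop_counit_right {α : G} (h : α = α * 1) (x : H α) :
    TensorProduct.rid k (H α) (TensorProduct.map LinearMap.id D.ε.toLinearMap (D.cop h x)) = x :=
  (D.counit_right α (castAlg k h x)).trans (castAlg_cast _ _ x)

theorem cop_counit_left {α : G} (h : α = 1 * α) (x : H α) :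
    TensorProduct.lid k (H α) (TensorProduct.map D.ε.toLinearMap LinearMap.id (D.cop h x)) = x :=
  (D.counit_left α (castAlg k h x)).trans (castAlg_cast _ _ x)

theorem cop_anti_left {α α' : G} (h1 : 1 = α' * α) (h2 : α = α'⁻¹) (x : H 1) :
    LinearMap.mul' k (H α)
      (TensorProduct.map (D.anti h2) LinearMap.id (D.cop h1 x)) = D.ε x • 1 := by
  obtain rfl : α' = α⁻¹ := by rw [h2, inv_inv]
  refine (D.antipode_left α (castAlg k h1 x)).trans ?_
  rw [castAlg_cast]

theorem cop_anti_right {α α' : G} (h1 : 1 = α * α') (h2 : α = α'⁻¹) (x : H 1) :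
    LinearMap.mul' k (H α)
      (TensorProduct.map LinearMap.id (D.anti h2) (D.cop h1 x)) = D.ε x • 1 := by
  obtain rfl : α' = α⁻¹ := by rw [h2, inv_inv]
  refine (D.antipode_right α (castAlg k h1 x)).trans ?_
  rw [castAlg_cast]

variable {D}

theorem IsRightIntegral.cop {μ : ∀ γ : G, H γ →ₗ[k] k} (hμ : D.IsRightIntegral μ)
    {α β t : G} (h : t = α * β) (x : H t) :
    TensorProduct.lid k (H β) (TensorProduct.map (μ α) LinearMap.id (D.cop h x)) = μ t x • 1 := by
  subst h
  exact hμ α β x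

theorem IsPivot.cop {g : ∀ γ : G, (H γ)ˣ} (hg : D.IsPivot g) {α β t : G} (h : t = α * β) :
    D.cop h (g t : H t) = (g α : H α) ⊗ₜ[k] (g β : H β) := by
  subst h
  exact hg.delta α β

theorem IsPivot.anti_anti {g : ∀ γ : G, (H γ)ˣ} (hg : D.IsPivot g) {α α' : G} (h : α' = α⁻¹)
    (h' : α = α'⁻¹) (x : H α) :
    D.anti h' (D.anti h x) = (g α : H α) * x * ((g α)⁻¹ : (H α)ˣ) := by
  subst h
  exact hg.antipode α x

/-- A group-like family satisfies `S(g⁻¹) = g`. -/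
theorem IsPivot.anti_inv {g : ∀ γ : G, (H γ)ˣ} (hg : D.IsPivot g) {α α' : G} (h : α = α'⁻¹) :
    D.anti h ((g α')⁻¹ : (H α')ˣ) = (g α : H α) := by
  have h1 : (1 : G) = α * α' := by rw [h, inv_mul_cancel]
  have e1 : D.cop h1 ((g 1)⁻¹ : (H 1)ˣ)
      = (((g α)⁻¹ : (H α)ˣ) : H α) ⊗ₜ[k] (((g α')⁻¹ : (H α')ˣ) : H α') := by
    refine left_inv_eq_right_inv (a := D.cop h1 (g 1 : H 1)) ?_ ?_
    · rw [← map_mul, Units.inv_mul, map_one]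
    · rw [hg.cop h1, Algebra.TensorProduct.tmul_mul_tmul, Units.mul_inv, Units.mul_inv,
        Algebra.TensorProduct.one_def]
  have e2 := D.cop_anti_right h1 h (((g 1)⁻¹ : (H 1)ˣ) : H 1)
  have e3 : D.ε (((g 1)⁻¹ : (H 1)ˣ) : H 1) = 1 := by
    have := congrArg D.ε (Units.inv_mul (g 1))
    rwa [map_mul, hg.counit, mul_one, map_one] at this
  rw [e1, e3, TensorProduct.map_tmul, LinearMap.mul'_apply, one_smul, LinearMap.id_apply] at e2
  calc D.anti h ((g α')⁻¹ : (H α')ˣ)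
      = (g α : H α) * ((((g α)⁻¹ : (H α)ˣ) : H α) * D.anti h ((g α')⁻¹ : (H α')ˣ)) := by
        rw [← mul_assoc, Units.mul_inv, one_mul]
    _ = _ := by rw [e2, mul_one]

end FreeIndices

/-! ### The cointegral and the symmetry of the symmetrised integral -/

section Cointegral

variable {k G : Type} [Field k] [Group G] {H : G → Type}
  [∀ γ : G, Ring (H γ)] [∀ γ : G, Algebra k (H γ)] (D : HopfGCoalgebra k G H)

/-- For a right cointegral `Λ`, elements move through `Δ(Λ)` on the right:
`Λ₁ h ⊗ Λ₂ = Λ₁ ⊗ Λ₂ S(h)`. -/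
theorem cointegral_mul_right {Λ : H 1} (hΛ : ∀ h : H 1, Λ * h = D.ε h • Λ) {α α' : G}
    (h1 : 1 = α * α') (h2 : α' = α⁻¹) (h : H α) :
    D.cop h1 Λ * (h ⊗ₜ[k] 1) = D.cop h1 Λ * (1 ⊗ₜ[k] D.anti h2 h) := by
  have h3 : (1 : G) = α' * α := by rw [h2, inv_mul_cancel]
  let Θ : (H α ⊗[k] H α') ⊗[k] H α →ₗ[k] H α ⊗[k] H α' :=
    TensorProduct.lift ((LinearMap.mul k (H α ⊗[k] H α')).compl₁₂
      (LinearMap.mulLeft k (D.cop h1 Λ))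
      ((Algebra.TensorProduct.includeRight (R := k) (A := H α) (B := H α')).toLinearMap
        ∘ₗ D.anti h2))
  have hΘ : ∀ u v, Θ (u ⊗ₜ v) = D.cop h1 Λ * u * (1 ⊗ₜ[k] D.anti h2 v) := fun u v => by
    simp [Θ]
  have e := congrArg Θ (D.cop_coassoc h1 (one_mul α).symm h3 (mul_one α).symm h)
  have eL : ∀ z : H 1 ⊗[k] H α,
      Θ (TensorProduct.map (D.cop h1).toLinearMap LinearMap.id z)
        = D.cop h1 Λ * (1 ⊗ₜ[k] D.anti h2
            (TensorProduct.lid k (H α) (TensorProduct.map D.ε.toLinearMap LinearMap.id z))) := by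
    intro z
    induction z with
    | zero => simp
    | add x y hx hy => simp only [map_add, hx, hy, TensorProduct.tmul_add, mul_add]
    | tmul x y =>
      rw [TensorProduct.map_tmul, TensorProduct.map_tmul, hΘ, TensorProduct.lid_tmul]
      simp only [AlgHom.toLinearMap_apply, LinearMap.id_apply, map_smul, TensorProduct.tmul_smul]
      rw [← map_mul, hΛ, map_smul, smul_mul_assoc, mul_smul_comm]
  have eM : ∀ (a : H α) (y : H α' ⊗[k] H α),
      Θ ((TensorProduct.assoc k (H α) (H α') (H α)).symm (a ⊗ₜ y))
        = D.cop h1 Λ * (a ⊗ₜ[k] LinearMap.mul' k (H α')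
            (TensorProduct.map LinearMap.id (D.anti h2) y)) := by
    intro a y
    induction y with
    | zero => simp
    | add x y hx hy => simp only [map_add, hx, hy, TensorProduct.tmul_add, mul_add]
    | tmul x y =>
      rw [TensorProduct.assoc_symm_tmul, hΘ, mul_assoc, Algebra.TensorProduct.tmul_mul_tmul]
      simp
  have eR : ∀ z : H α ⊗[k] H 1,
      Θ ((TensorProduct.assoc k (H α) (H α') (H α)).symm
          (TensorProduct.map LinearMap.id (D.cop h3).toLinearMap z))
        = D.cop h1 Λ * (TensorProduct.rid k (H α)
            (TensorProduct.map LinearMap.id D.ε.toLinearMap z) ⊗ₜ[k] 1) := by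
    intro z
    induction z with
    | zero => simp
    | add x y hx hy => simp only [map_add, hx, hy, TensorProduct.add_tmul, mul_add]
    | tmul x y =>
      rw [TensorProduct.map_tmul, TensorProduct.map_tmul, eM, AlgHom.toLinearMap_apply,
        D.cop_anti_right h3 h2, TensorProduct.rid_tmul, TensorProduct.smul_tmul]
      rfl
  rw [eL, eR, D.cop_counit_left, D.cop_counit_right] at e
  exact e.symm

/-- For a left cointegral `Λ`, elements move through `Δ(Λ)` on the left:
`Λ₁ ⊗ h Λ₂ = S(h) Λ₁ ⊗ Λ₂`. -/
theorem cointegral_mul_left {Λ : H 1} (hΛ : ∀ h : H 1, h * Λ = D.ε h • Λ) {α α' : G}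
    (h1 : 1 = α * α') (h2 : α = α'⁻¹) (h : H α') :
    (1 ⊗ₜ[k] h) * D.cop h1 Λ = (D.anti h2 h ⊗ₜ[k] 1) * D.cop h1 Λ := by
  have h3 : (1 : G) = α' * α := by rw [h2, mul_inv_cancel]
  let Θ : H α' ⊗[k] (H α ⊗[k] H α') →ₗ[k] H α ⊗[k] H α' :=
    TensorProduct.lift ((LinearMap.mul k (H α ⊗[k] H α')).compl₁₂
      ((Algebra.TensorProduct.includeLeft (R := k) (S := k) (A := H α) (B := H α')).toLinearMap
        ∘ₗ D.anti h2)
      (LinearMap.mulRight k (D.cop h1 Λ)))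
  have hΘ : ∀ u v, Θ (u ⊗ₜ v) = (D.anti h2 u ⊗ₜ[k] 1) * (v * D.cop h1 Λ) := fun u v => by
    simp [Θ]
  have e := congrArg (fun z => Θ (TensorProduct.assoc k (H α') (H α) (H α') z))
    (D.cop_coassoc h3 (one_mul α').symm h1 (mul_one α').symm h)
  simp only [LinearEquiv.apply_symm_apply] at e
  have eL : ∀ z : H α' ⊗[k] H 1,
      Θ (TensorProduct.map LinearMap.id (D.cop h1).toLinearMap z)
        = (D.anti h2 (TensorProduct.rid k (H α')
            (TensorProduct.map LinearMap.id D.ε.toLinearMap z)) ⊗ₜ[k] 1) * D.cop h1 Λ := by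
    intro z
    induction z with
    | zero => simp
    | add x y hx hy => simp only [map_add, hx, hy, TensorProduct.add_tmul, add_mul]
    | tmul x y =>
      rw [TensorProduct.map_tmul, TensorProduct.map_tmul, hΘ, TensorProduct.rid_tmul]
      simp only [AlgHom.toLinearMap_apply, LinearMap.id_apply, map_smul,
        ← TensorProduct.smul_tmul']
      rw [← map_mul, hΛ, map_smul, smul_mul_assoc, mul_smul_comm]
  have eM : ∀ (a : H α') (y : H α' ⊗[k] H α),
      Θ (TensorProduct.assoc k (H α') (H α) (H α') (y ⊗ₜ a))
        = (LinearMap.mul' k (H α) (TensorProduct.map (D.anti h2) LinearMap.id y) ⊗ₜ[k] a)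
            * D.cop h1 Λ := by
    intro a y
    induction y with
    | zero => simp
    | add x y hx hy => simp only [map_add, hx, hy, TensorProduct.add_tmul, add_mul]
    | tmul x y =>
      rw [TensorProduct.assoc_tmul, hΘ, ← mul_assoc, Algebra.TensorProduct.tmul_mul_tmul]
      simp
  have eR : ∀ z : H 1 ⊗[k] H α',
      Θ (TensorProduct.assoc k (H α') (H α) (H α')
          (TensorProduct.map (D.cop h3).toLinearMap LinearMap.id z))
        = (1 ⊗ₜ[k] TensorProduct.lid k (H α')
            (TensorProduct.map D.ε.toLinearMap LinearMap.id z)) * D.cop h1 Λ := by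
    intro z
    induction z with
    | zero => simp
    | add x y hx hy => simp only [map_add, hx, hy, TensorProduct.tmul_add, add_mul]
    | tmul x y =>
      rw [TensorProduct.map_tmul, TensorProduct.map_tmul, eM, AlgHom.toLinearMap_apply,
        D.cop_anti_left h3 h2, TensorProduct.lid_tmul, TensorProduct.smul_tmul]
      rfl
  rw [eL, eR, D.cop_counit_left, D.cop_counit_right] at e
  exact e

/-- `f ↦ f(Λ₁) Λ₂`, the map `H_α* → H_{α⁻¹}` attached to `Λ ∈ H₁`. -/
def slice (Λ : H 1) {α α' : G} (h1 : 1 = α * α') (f : H α →ₗ[k] k) : H α' :=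
  TensorProduct.lid k (H α') (TensorProduct.map f LinearMap.id (D.cop h1 Λ))

theorem slice_mulRight {Λ : H 1} (hΛ : ∀ h : H 1, Λ * h = D.ε h • Λ) {α α' : G}
    (h1 : 1 = α * α') (h2 : α' = α⁻¹) (f : H α →ₗ[k] k) (h : H α) :
    D.slice Λ h1 (f ∘ₗ LinearMap.mulRight k h) = D.slice Λ h1 f * D.anti h2 h := by
  have eL : ∀ z : H α ⊗[k] H α',
      TensorProduct.lid k (H α')
          (TensorProduct.map (f ∘ₗ LinearMap.mulRight k h) LinearMap.id z)
        = TensorProduct.lid k (H α') (TensorProduct.map f LinearMap.id (z * (h ⊗ₜ[k] 1))) := by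
    intro z
    induction z with
    | zero => simp
    | add x y hx hy => simp only [map_add, hx, hy, add_mul]
    | tmul x y => simp
  have eR : ∀ (b : H α') (z : H α ⊗[k] H α'),
      TensorProduct.lid k (H α') (TensorProduct.map f LinearMap.id (z * (1 ⊗ₜ[k] b)))
        = TensorProduct.lid k (H α') (TensorProduct.map f LinearMap.id z) * b := by
    intro b z
    induction z with
    | zero => simp
    | add x y hx hy => simp only [map_add, hx, hy, add_mul]
    | tmul x y => simp
  rw [slice, eL, D.cointegral_mul_right hΛ h1 h2, eR, slice]

theorem slice_mulLeft {Λ : H 1} (hΛ : ∀ h : H 1, h * Λ = D.ε h • Λ) {α α' : G}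
    (h1 : 1 = α * α') (h2 : α = α'⁻¹) (f : H α →ₗ[k] k) (h : H α') :
    D.slice Λ h1 (f ∘ₗ LinearMap.mulLeft k (D.anti h2 h)) = h * D.slice Λ h1 f := by
  have eL : ∀ (a : H α) (z : H α ⊗[k] H α'),
      TensorProduct.lid k (H α')
          (TensorProduct.map (f ∘ₗ LinearMap.mulLeft k a) LinearMap.id z)
        = TensorProduct.lid k (H α') (TensorProduct.map f LinearMap.id ((a ⊗ₜ[k] 1) * z)) := by
    intro a z
    induction z with
    | zero => simp
    | add x y hx hy => simp only [map_add, hx, hy, mul_add]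
    | tmul x y => simp
  have eR : ∀ z : H α ⊗[k] H α',
      TensorProduct.lid k (H α') (TensorProduct.map f LinearMap.id ((1 ⊗ₜ[k] h) * z))
        = h * TensorProduct.lid k (H α') (TensorProduct.map f LinearMap.id z) := by
    intro z
    induction z with
    | zero => simp
    | add x y hx hy => simp only [map_add, hx, hy, mul_add]
    | tmul x y => simp
  rw [slice, eL, ← D.cointegral_mul_left hΛ h1 h2, eR, slice]

/-- Nondegeneracy of a right cointegral. If `f(Λ₁) Λ₂ = 0` then `f(Λ₁ a) Λ₂ = f(Λ₁) Λ₂ S(a) = 0`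
for every `a`, whence `f(h) Λ = f(Λ₁ S(Λ₂) h) Λ₃ = 0`. -/
theorem eq_zero_of_slice_eq_zero [∀ γ : G, FiniteDimensional k (H γ)] {Λ : H 1} (hΛ0 : Λ ≠ 0)
    (hΛ : ∀ h : H 1, Λ * h = D.ε h • Λ) {α α' : G}
    (h1 : 1 = α * α') (h2 : α' = α⁻¹) (f : H α →ₗ[k] k) (hf : D.slice Λ h1 f = 0) : f = 0 := by
  have h2' : α = α'⁻¹ := by rw [h2, inv_inv]
  ext h
  let Θ : (H α ⊗[k] H α') ⊗[k] H 1 →ₗ[k] H 1 :=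
    (TensorProduct.lid k (H 1)).toLinearMap ∘ₗ
      TensorProduct.map (f ∘ₗ LinearMap.mulRight k h ∘ₗ LinearMap.mul' k (H α) ∘ₗ
        TensorProduct.map LinearMap.id (D.anti h2')) LinearMap.id
  have e := congrArg Θ (D.cop_coassoc h1 (one_mul 1).symm (mul_one α').symm h1 Λ)
  have eL : ∀ z : H 1 ⊗[k] H 1,
      Θ (TensorProduct.map (D.cop h1).toLinearMap LinearMap.id z)
        = f h • TensorProduct.lid k (H 1) (TensorProduct.map D.ε.toLinearMap LinearMap.id z) := by
    intro z
    induction z with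
    | zero => simp
    | add x y hx hy => simp only [map_add, hx, hy, smul_add]
    | tmul x y =>
      simp only [Θ, TensorProduct.map_tmul, LinearMap.comp_apply, AlgHom.toLinearMap_apply,
        D.cop_anti_right h1 h2', LinearEquiv.coe_coe, TensorProduct.lid_tmul, LinearMap.id_apply,
        LinearMap.mulRight_apply, one_mul, map_smul, smul_eq_mul, smul_smul]
      rw [mul_comm]
  let b := Module.finBasis k (H α)
  -- Expanding the argument of `f(u ·)` in a basis isolates the slices `f(Λ₁ bᵢ) Λ₂`.
  let K : Fin (Module.finrank k (H α)) → H α' →ₗ[k] H 1 := fun i =>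
    (TensorProduct.lid k (H 1)).toLinearMap ∘ₗ
      TensorProduct.map (b.coord i ∘ₗ LinearMap.mulRight k h ∘ₗ D.anti h2') LinearMap.id ∘ₗ
      (D.cop (mul_one α').symm).toLinearMap
  have hexp : ∀ u a : H α, f (u * a) = ∑ i, b.coord i a * f (u * b i) := by
    intro u a
    conv_lhs => rw [← b.sum_repr a, Finset.mul_sum, map_sum]
    simp
  have eM : ∀ (u : H α) (y : H α' ⊗[k] H 1),
      Θ ((TensorProduct.assoc k (H α) (H α') (H 1)).symm (u ⊗ₜ y))
        = ∑ i, f (u * b i) • TensorProduct.lid k (H 1)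
            (TensorProduct.map (b.coord i ∘ₗ LinearMap.mulRight k h ∘ₗ D.anti h2')
              LinearMap.id y) := by
    intro u y
    induction y with
    | zero => simp
    | add x y hx hy => simp only [map_add, hx, hy, TensorProduct.tmul_add, smul_add,
        Finset.sum_add_distrib]
    | tmul x y =>
      simp only [Θ, TensorProduct.assoc_symm_tmul, TensorProduct.map_tmul, LinearMap.comp_apply,
        LinearEquiv.coe_coe, TensorProduct.lid_tmul, LinearMap.id_apply,
        LinearMap.mulRight_apply, LinearMap.mul'_apply, mul_assoc, smul_smul]
      rw [hexp, Finset.sum_smul]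
      exact Finset.sum_congr rfl fun i _ => by rw [mul_comm]
  have eR : ∀ z : H α ⊗[k] H α',
      Θ ((TensorProduct.assoc k (H α) (H α') (H 1)).symm
          (TensorProduct.map LinearMap.id (D.cop (mul_one α').symm).toLinearMap z))
        = ∑ i, K i (TensorProduct.lid k (H α')
            (TensorProduct.map (f ∘ₗ LinearMap.mulRight k (b i)) LinearMap.id z)) := by
    intro z
    induction z with
    | zero => simp
    | add x y hx hy => simp only [map_add, hx, hy, Finset.sum_add_distrib]
    | tmul x y =>
      rw [TensorProduct.map_tmul, eM]
      simp [K]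
  rw [eL, eR, D.cop_counit_left] at e
  have hz : ∀ i, TensorProduct.lid k (H α') (TensorProduct.map
      (f ∘ₗ LinearMap.mulRight k (b i)) LinearMap.id (D.cop h1 Λ)) = 0 := by
    intro i
    have := D.slice_mulRight hΛ h1 h2 f (b i)
    rwa [hf, zero_mul] at this
  simp only [hz, map_zero, Finset.sum_const_zero] at e
  simpa [hΛ0] using e

variable {D}

/-- In the unimodular case the form `x ↦ μ_γ(g_γ x)` is symmetric: both `μ_γ(· y)` and
`μ_γ(S²(y) ·)` have slice `μ₁(Λ) S(y)`, hence coincide. -/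
theorem symmetrised_comm [∀ γ : G, FiniteDimensional k (H γ)] {g : ∀ γ : G, (H γ)ˣ}
    (hg : D.IsPivot g) (huni : D.IsUnimodular) {μ : ∀ γ : G, H γ →ₗ[k] k}
    (hμ : D.IsRightIntegral μ) (γ : G) (x y : H γ) :
    μ γ ((g γ : H γ) * (x * y)) = μ γ ((g γ : H γ) * (y * x)) := by
  obtain ⟨Λ, hΛ0, hΛ⟩ := huni
  have h1 : (1 : G) = γ * γ⁻¹ := (mul_inv_cancel γ).symm
  have h2 : γ = γ⁻¹⁻¹ := (inv_inv γ).symm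
  have hs : D.slice Λ h1 (μ γ) = μ 1 Λ • 1 := hμ.cop h1 Λ
  have key : μ γ ∘ₗ LinearMap.mulRight k y
      = μ γ ∘ₗ LinearMap.mulLeft k (D.anti h2 (D.anti rfl y)) := by
    rw [← sub_eq_zero]
    refine D.eq_zero_of_slice_eq_zero hΛ0 (fun h => (hΛ h).2) h1 rfl _ ?_
    have e : ∀ f f' : H γ →ₗ[k] k, D.slice Λ h1 (f - f') = D.slice Λ h1 f - D.slice Λ h1 f' := by
      intro f f'
      have e' := LinearMap.congr_fun (LinearMap.rTensor_sub (Q := H γ⁻¹) f f') (D.cop h1 Λ)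
      exact (congrArg (TensorProduct.lid k (H γ⁻¹)) e').trans (map_sub _ _ _)
    rw [e, D.slice_mulRight (fun h => (hΛ h).2) h1 rfl,
      D.slice_mulLeft (fun h => (hΛ h).1) h1 h2, hs, smul_mul_assoc, one_mul, mul_smul_comm,
      mul_one, sub_self]
  have := LinearMap.congr_fun key ((g γ : H γ) * x)
  simp only [LinearMap.comp_apply, LinearMap.mulRight_apply, LinearMap.mulLeft_apply,
    hg.anti_anti] at this
  rw [← mul_assoc, this]
  congr 1
  rw [mul_assoc, Units.inv_mul_cancel_left, mul_assoc]

/-- The symmetrised integral along the coproduct: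
`μ_{αβ}(g_{αβ} u₁) S(u₂) = μ_α(g_α u) g_β` for `u ∈ H_α` and `Δ(u) ∈ H_{αβ} ⊗ H_{β⁻¹}`. -/
theorem symmetrised_cop {g : ∀ γ : G, (H γ)ˣ}
    (hg : D.IsPivot g) {μ : ∀ γ : G, H γ →ₗ[k] k}
    (hμ : D.IsRightIntegral μ) {α β β' t : G} (h : α = t * β') (hβ : β = β'⁻¹) (u : H α) :
    TensorProduct.lid k (H β) (TensorProduct.map (μ t ∘ₗ LinearMap.mulLeft k (g t : H t))
      (D.anti hβ) (D.cop h u)) = μ α ((g α : H α) * u) • (g β : H β) := by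
  have e := hμ.cop h ((g α : H α) * u)
  rw [map_mul, hg.cop h] at e
  have e2 : ∀ z : H t ⊗[k] H β',
      TensorProduct.lid k (H β) (TensorProduct.map (μ t ∘ₗ LinearMap.mulLeft k (g t : H t))
        (D.anti hβ) z)
      = D.anti hβ ((((g β')⁻¹ : (H β')ˣ) : H β') * TensorProduct.lid k (H β')
          (TensorProduct.map (μ t) LinearMap.id (((g t : H t) ⊗ₜ[k] (g β' : H β')) * z))) := by
    intro z
    induction z with
    | zero => simp
    | add x y hx hy => simp only [map_add, hx, hy, mul_add]
    | tmul x y => simp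
  rw [e2, e, mul_smul_comm, mul_one, map_smul, hg.anti_inv hβ]

end Cointegral

end HopfGCoalgebra

/-! ### Traces on projective modules from symmetric forms -/

section ProjectiveTrace

variable {k A : Type} [Field k] [Ring A] [Algebra k A]

/-- The dual basis lemma: a finite-dimensional projective module has a finite dual basis. -/
theorem exists_dualBasis (k A P : Type) [Field k] [Ring A] [Algebra k A]
    [AddCommGroup P] [Module k P] [Module A P]
    [IsScalarTower k A P] [FiniteDimensional k P] [Module.Projective A P] :
    ∃ (n : ℕ) (a : Fin n → P →ₗ[A] A) (b : Fin n → P), ∀ p, ∑ i, a i p • b i = p := by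
  have : Module.Finite A P := Module.Finite.of_restrictScalars_finite k A P
  obtain ⟨n, f, g, -, -, hfg⟩ := Module.Finite.exists_comp_eq_id_of_projective A P
  refine ⟨n, fun i => LinearMap.proj i ∘ₗ g, fun i => f (Pi.single i 1), fun p => ?_⟩
  have h := LinearMap.congr_fun hfg p
  rw [LinearMap.comp_apply, LinearMap.id_apply] at h
  conv_rhs => rw [← h, pi_eq_sum_univ' (g p), map_sum]
  refine Finset.sum_congr rfl fun i _ => ?_
  rw [map_smul]
  congr 2

/-- For a symmetric form `τ`, the quantity `∑ i, τ (aᵢ (g (f bᵢ)))` computed from a dual basis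
is cyclic. Taking `f = id` shows that it does not depend on the dual basis. -/
theorem sum_dualBasis_comm {τ : A →ₗ[k] k} (hτ : ∀ x y, τ (x * y) = τ (y * x))
    {P Q : Type} [AddCommGroup P] [Module A P] [AddCommGroup Q] [Module A Q]
    {ι κ : Type} [Fintype ι] [Fintype κ]
    {a : ι → P →ₗ[A] A} {b : ι → P} (hab : ∀ p, ∑ i, a i p • b i = p)
    {a' : κ → Q →ₗ[A] A} {b' : κ → Q} (hab' : ∀ q, ∑ j, a' j q • b' j = q)
    (f : P →ₗ[A] Q) (g : Q →ₗ[A] P) :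
    ∑ i, τ (a i (g (f (b i)))) = ∑ j, τ (a' j (f (g (b' j)))) := by
  have e1 : ∀ i, τ (a i (g (f (b i)))) = ∑ j, τ (a' j (f (b i)) * a i (g (b' j))) := by
    intro i
    conv_lhs => rw [← hab' (f (b i))]
    simp only [map_sum, map_smul, smul_eq_mul]
  have e2 : ∀ j, τ (a' j (f (g (b' j)))) = ∑ i, τ (a i (g (b' j)) * a' j (f (b i))) := by
    intro j
    conv_lhs => rw [← hab (g (b' j))]
    simp only [map_sum, map_smul, smul_eq_mul]
  simp only [e1, e2]
  rw [Finset.sum_comm]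
  exact Finset.sum_congr rfl fun j _ => Finset.sum_congr rfl fun i _ => hτ _ _

/-- The Hattori–Stallings type trace `f ↦ ∑ i, τ (aᵢ (f bᵢ))` on the endomorphisms of a
projective module, computed with a chosen dual basis. -/
noncomputable def projTrace (τ : A →ₗ[k] k) (P : Type)
    [AddCommGroup P] [Module k P] [Module A P]
    [IsScalarTower k A P] [FiniteDimensional k P] [Module.Projective A P] :
    (P →ₗ[A] P) →ₗ[k] k where
  toFun f := ∑ i, τ ((exists_dualBasis k A P).choose_spec.choose i
    (f ((exists_dualBasis k A P).choose_spec.choose_spec.choose i)))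
  map_add' f f' := by simp [Finset.sum_add_distrib]
  map_smul' c f := by
    simp only [LinearMap.smul_apply, RingHom.id_apply, smul_eq_mul, Finset.mul_sum]
    refine Finset.sum_congr rfl fun i _ => ?_
    rw [← algebraMap_smul A c, map_smul, algebraMap_smul, map_smul, smul_eq_mul]

theorem projTrace_eq {τ : A →ₗ[k] k} (hτ : ∀ x y, τ (x * y) = τ (y * x)) {P : Type}
    [AddCommGroup P] [Module k P] [Module A P]
    [IsScalarTower k A P] [FiniteDimensional k P] [Module.Projective A P]
    {ι : Type} [Fintype ι]
    {a : ι → P →ₗ[A] A} {b : ι → P} (hab : ∀ p, ∑ i, a i p • b i = p) (f : P →ₗ[A] P) :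
    projTrace τ P f = ∑ i, τ (a i (f (b i))) :=
  sum_dualBasis_comm hτ (exists_dualBasis k A P).choose_spec.choose_spec.choose_spec hab
    LinearMap.id f

theorem projTrace_comm {τ : A →ₗ[k] k} (hτ : ∀ x y, τ (x * y) = τ (y * x)) {P Q : Type}
    [AddCommGroup P] [Module k P] [Module A P]
    [IsScalarTower k A P] [FiniteDimensional k P] [Module.Projective A P]
    [AddCommGroup Q] [Module k Q] [Module A Q]
    [IsScalarTower k A Q] [FiniteDimensional k Q] [Module.Projective A Q]
    (f : P →ₗ[A] Q) (g : Q →ₗ[A] P) :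
    projTrace τ P (g.comp f) = projTrace τ Q (f.comp g) :=
  sum_dualBasis_comm hτ (exists_dualBasis k A P).choose_spec.choose_spec.choose_spec
    (exists_dualBasis k A Q).choose_spec.choose_spec.choose_spec f g

end ProjectiveTrace

namespace HopfGCoalgebra

/-! ### A dual basis of `P ⊗ W` -/

section TensorDualBasis

variable {k G : Type} [Field k] [Group G] {H : G → Type}
  [∀ γ : G, Ring (H γ)] [∀ γ : G, Algebra k (H γ)] (D : HopfGCoalgebra k G H)
  (W : Type) [AddCommGroup W] [Module k W]

section Untwist

variable {α β β' t : G} [Module (H β) W] [IsScalarTower k (H β) W]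

/-- `x ⊗ w ↦ x₁ ⊗ x₂ w`, from `H_{αβ} ⊗ W` to `H_α ⊗ W`. It intertwines left multiplication on
`H_{αβ}` with the diagonal action. -/
noncomputable def twist (h0 : t = α * β) : H t ⊗[k] W →ₗ[k] H α ⊗[k] W :=
  TensorProduct.map LinearMap.id (TensorProduct.lift (Algebra.lsmul k k W).toLinearMap)
    ∘ₗ (TensorProduct.assoc k (H α) (H β) W).toLinearMap
    ∘ₗ TensorProduct.map (D.cop h0).toLinearMap LinearMap.id

/-- `y ⊗ w ↦ y₁ ⊗ S(y₂) w`, from `H_α ⊗ W` to `H_{αβ} ⊗ W`: the inverse of `twist`. -/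
noncomputable def untwist (h : α = t * β') (hβ : β = β'⁻¹) : H α ⊗[k] W →ₗ[k] H t ⊗[k] W :=
  TensorProduct.map LinearMap.id
      (TensorProduct.lift ((Algebra.lsmul k k W).toLinearMap ∘ₗ D.anti hβ))
    ∘ₗ (TensorProduct.assoc k (H t) (H β') W).toLinearMap
    ∘ₗ TensorProduct.map (D.cop h).toLinearMap LinearMap.id

variable {W}

theorem map_lift_assoc {X Y Z : Type} [AddCommGroup X] [Module k X] [AddCommGroup Y] [Module k Y]
    [AddCommGroup Z] [Module k Z] (ρ : Y →ₗ[k] Z →ₗ[k] Z) (q : X ⊗[k] Y) (w : Z) :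
    TensorProduct.map LinearMap.id (TensorProduct.lift ρ) (TensorProduct.assoc k X Y Z (q ⊗ₜ w))
      = TensorProduct.map LinearMap.id (ρ.flip w) q := by
  induction q with
  | zero => simp
  | add x y hx hy => simp only [map_add, hx, hy, TensorProduct.add_tmul]
  | tmul x y => simp

theorem twist_tmul (h0 : t = α * β) (x : H t) (w : W) :
    D.twist W h0 (x ⊗ₜ w)
      = TensorProduct.map LinearMap.id ((Algebra.lsmul k k W).toLinearMap.flip w) (D.cop h0 x) :=
  map_lift_assoc _ _ _

theorem untwist_tmul (h : α = t * β') (hβ : β = β'⁻¹) (y : H α) (w : W) :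
    D.untwist W h hβ (y ⊗ₜ w)
      = TensorProduct.map LinearMap.id (((Algebra.lsmul k k W).toLinearMap ∘ₗ D.anti hβ).flip w)
          (D.cop h y) :=
  map_lift_assoc _ _ _

theorem untwist_twist (h0 : t = α * β) (h : α = t * β') (hβ : β = β'⁻¹) (z : H t ⊗[k] W) :
    D.untwist W h hβ (D.twist W h0 z) = z := by
  have h1 : (1 : G) = β' * β := by rw [hβ, mul_inv_cancel]
  induction z with
  | zero => simp
  | add x y hx hy => rw [map_add, map_add, hx, hy]
  | tmul x w =>
    rw [twist_tmul]
    have e1 : ∀ q : H α ⊗[k] H β, D.untwist W h hβ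
        (TensorProduct.map LinearMap.id ((Algebra.lsmul k k W).toLinearMap.flip w) q)
        = TensorProduct.map LinearMap.id ((Algebra.lsmul k k W).toLinearMap.flip w ∘ₗ
            LinearMap.mul' k (H β) ∘ₗ TensorProduct.map (D.anti hβ) LinearMap.id)
          (TensorProduct.assoc k (H t) (H β') (H β)
            (TensorProduct.map (D.cop h).toLinearMap LinearMap.id q)) := by
      intro q
      induction q with
      | zero => simp
      | add x y hx hy => simp only [map_add, hx, hy]
      | tmul y z =>
        rw [TensorProduct.map_tmul, TensorProduct.map_tmul, untwist_tmul, LinearMap.id_apply]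
        generalize hr : (D.cop h).toLinearMap y = r
        rw [AlgHom.toLinearMap_apply] at hr
        rw [hr]
        clear hr
        induction r with
        | zero => simp
        | add x y hx hy => simp only [map_add, hx, hy, TensorProduct.add_tmul]
        | tmul u v => simp
    have e2 : ∀ q : H t ⊗[k] H 1,
        TensorProduct.map LinearMap.id ((Algebra.lsmul k k W).toLinearMap.flip w ∘ₗ
            LinearMap.mul' k (H β) ∘ₗ TensorProduct.map (D.anti hβ) LinearMap.id)
          (TensorProduct.map LinearMap.id (D.cop h1).toLinearMap q)
        = TensorProduct.rid k (H t) (TensorProduct.map LinearMap.id D.ε.toLinearMap q)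
            ⊗ₜ[k] w := by
      intro q
      induction q with
      | zero => simp
      | add x y hx hy => simp only [map_add, hx, hy, TensorProduct.add_tmul]
      | tmul u v =>
        simp only [TensorProduct.map_tmul, LinearMap.comp_apply, AlgHom.toLinearMap_apply,
          D.cop_anti_left h1 hβ, LinearMap.id_apply, map_smul, TensorProduct.rid_tmul,
          TensorProduct.smul_tmul]
        simp
    rw [e1, D.cop_coassoc h h0 h1 (mul_one t).symm, LinearEquiv.apply_symm_apply, e2,
      D.cop_counit_right]

theorem twist_untwist (h0 : t = α * β) (h : α = t * β') (hβ : β = β'⁻¹) (z : H α ⊗[k] W) :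
    D.twist W h0 (D.untwist W h hβ z) = z := by
  have h1 : (1 : G) = β * β' := by rw [hβ, inv_mul_cancel]
  induction z with
  | zero => simp
  | add x y hx hy => rw [map_add, map_add, hx, hy]
  | tmul x w =>
    rw [untwist_tmul]
    have e1 : ∀ q : H t ⊗[k] H β', D.twist W h0
        (TensorProduct.map LinearMap.id
          (((Algebra.lsmul k k W).toLinearMap ∘ₗ D.anti hβ).flip w) q)
        = TensorProduct.map LinearMap.id ((Algebra.lsmul k k W).toLinearMap.flip w ∘ₗ
            LinearMap.mul' k (H β) ∘ₗ TensorProduct.map LinearMap.id (D.anti hβ))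
          (TensorProduct.assoc k (H α) (H β) (H β')
            (TensorProduct.map (D.cop h0).toLinearMap LinearMap.id q)) := by
      intro q
      induction q with
      | zero => simp
      | add x y hx hy => simp only [map_add, hx, hy]
      | tmul y z =>
        rw [TensorProduct.map_tmul, TensorProduct.map_tmul, twist_tmul, LinearMap.id_apply]
        generalize hr : (D.cop h0).toLinearMap y = r
        rw [AlgHom.toLinearMap_apply] at hr
        rw [hr]
        clear hr
        induction r with
        | zero => simp
        | add x y hx hy => simp only [map_add, hx, hy, TensorProduct.add_tmul]
        | tmul u v => simp
    have e2 : ∀ q : H α ⊗[k] H 1,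
        TensorProduct.map LinearMap.id ((Algebra.lsmul k k W).toLinearMap.flip w ∘ₗ
            LinearMap.mul' k (H β) ∘ₗ TensorProduct.map LinearMap.id (D.anti hβ))
          (TensorProduct.map LinearMap.id (D.cop h1).toLinearMap q)
        = TensorProduct.rid k (H α) (TensorProduct.map LinearMap.id D.ε.toLinearMap q)
            ⊗ₜ[k] w := by
      intro q
      induction q with
      | zero => simp
      | add x y hx hy => simp only [map_add, hx, hy, TensorProduct.add_tmul]
      | tmul u v =>
        simp only [TensorProduct.map_tmul, LinearMap.comp_apply, AlgHom.toLinearMap_apply,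
          D.cop_anti_right h1 hβ, LinearMap.id_apply, map_smul, TensorProduct.rid_tmul,
          TensorProduct.smul_tmul]
        simp
    rw [e1, D.cop_coassoc h0 h h1 (mul_one α).symm, LinearEquiv.apply_symm_apply, e2,
      D.cop_counit_right]

/-- The action of a tensor in `H_α ⊗ H_β` on `P ⊗ W`; `deltaRep` is this action precomposed with
the coproduct. -/
noncomputable def tensorAct (P W : Type) [AddCommGroup P] [Module k P] [Module (H α) P]
    [IsScalarTower k (H α) P] [AddCommGroup W] [Module k W] [Module (H β) W]
    [IsScalarTower k (H β) W] : H α ⊗[k] H β →ₐ[k] Module.End k (P ⊗[k] W) :=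
  Module.endTensorEndAlgHom.comp
    (Algebra.TensorProduct.map (Algebra.lsmul k k P) (Algebra.lsmul k k W))

theorem tensorAct_tmul {P : Type} [AddCommGroup P] [Module k P] [Module (H α) P]
    [IsScalarTower k (H α) P] (x : H α) (y : H β) (p : P) (w : W) :
    tensorAct P W (x ⊗ₜ[k] y) (p ⊗ₜ[k] w) = (x • p) ⊗ₜ[k] (y • w) := by
  simp [tensorAct, Module.endTensorEndAlgHom_apply]

theorem deltaRep_apply {P : Type} [AddCommGroup P] [Module k P] [Module (H α) P]
    [IsScalarTower k (H α) P] (h0 : t = α * β) (x : H t) :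
    D.deltaRep α β t h0 P W x = tensorAct P W (D.cop h0 x) := rfl

theorem tensorAct_map {P Q : Type} [AddCommGroup P] [Module k P] [Module (H α) P]
    [IsScalarTower k (H α) P] [AddCommGroup Q] [Module k Q] [Module (H α) Q]
    [IsScalarTower k (H α) Q] (a : P →ₗ[H α] Q) (d : H α ⊗[k] H β) (z : P ⊗[k] W) :
    TensorProduct.map (a.restrictScalars k) LinearMap.id (tensorAct P W d z)
      = tensorAct Q W d (TensorProduct.map (a.restrictScalars k) LinearMap.id z) := by
  induction z with
  | zero => simp
  | add x y hx hy => simp only [map_add, hx, hy]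
  | tmul p w =>
    induction d with
    | zero => simp
    | add x y hx hy => simp only [map_add, hx, hy, LinearMap.add_apply]
    | tmul x y => simp [tensorAct_tmul]

theorem twist_mul (h0 : t = α * β) (x : H t) (z : H t ⊗[k] W) :
    D.twist W h0 (TensorProduct.map (LinearMap.mulLeft k x) LinearMap.id z)
      = tensorAct (H α) W (D.cop h0 x) (D.twist W h0 z) := by
  induction z with
  | zero => simp
  | add x y hx hy => simp only [map_add, hx, hy]
  | tmul y w =>
    rw [TensorProduct.map_tmul, twist_tmul, twist_tmul, LinearMap.mulLeft_apply, map_mul,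
      LinearMap.id_apply]
    generalize D.cop h0 x = d
    generalize D.cop h0 y = q
    induction q with
    | zero => simp
    | add x y hx hy => simp only [map_add, hx, hy, mul_add]
    | tmul u v =>
      induction d with
      | zero => simp
      | add x y hx hy => simp only [map_add, hx, hy, LinearMap.add_apply, add_mul]
      | tmul x y => simp [tensorAct_tmul]

/-- `untwist` is linear because it inverts the linear map `twist`; this route avoids the
antimultiplicativity of the antipode. -/
theorem untwist_act (h0 : t = α * β) (h : α = t * β') (hβ : β = β'⁻¹) (x : H t)
    (z : H α ⊗[k] W) :
    D.untwist W h hβ (tensorAct (H α) W (D.cop h0 x) z)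
      = TensorProduct.map (LinearMap.mulLeft k x) LinearMap.id (D.untwist W h hβ z) := by
  conv_lhs => rw [← D.twist_untwist h0 h hβ z, ← twist_mul, untwist_twist]

theorem twist_eq_act (h0 : t = α * β) (x : H t) (w : W) :
    D.twist W h0 (x ⊗ₜ w) = tensorAct (H α) W (D.cop h0 x) (1 ⊗ₜ w) := by
  have e := D.twist_mul h0 x ((1 : H t) ⊗ₜ[k] w)
  rw [D.twist_tmul h0 1 w] at e
  simpa [Algebra.TensorProduct.one_def] using e

/-- The map `p ⊗ w ↦ φ(S(a(p)₂) w) a(p)₁` from `P ⊗ W` to `H_{αβ}`: a dual basis element of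
`P ⊗ W` built from `a` in a dual basis of `P` and `φ` in a dual basis of `W`. -/
noncomputable def tensorCoord {P : Type} [AddCommGroup P] [Module k P] [Module (H α) P]
    [IsScalarTower k (H α) P] (h : α = t * β') (hβ : β = β'⁻¹) (a : P →ₗ[H α] H α)
    (φ : W →ₗ[k] k) : P ⊗[k] W →ₗ[k] H t :=
  (TensorProduct.rid k (H t)).toLinearMap ∘ₗ TensorProduct.map LinearMap.id φ ∘ₗ
    D.untwist W h hβ ∘ₗ TensorProduct.map (a.restrictScalars k) LinearMap.id

/-- `tensorCoord` is `H_{αβ}`-linear. -/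
theorem tensorCoord_act {P : Type} [AddCommGroup P] [Module k P] [Module (H α) P]
    [IsScalarTower k (H α) P] (h0 : t = α * β) (h : α = t * β') (hβ : β = β'⁻¹)
    (a : P →ₗ[H α] H α) (φ : W →ₗ[k] k) (x : H t) (z : P ⊗[k] W) :
    D.tensorCoord h hβ a φ (tensorAct P W (D.cop h0 x) z) = x * D.tensorCoord h hβ a φ z := by
  simp only [tensorCoord, LinearMap.comp_apply]
  rw [tensorAct_map, D.untwist_act h0]
  generalize D.untwist W h hβ _ = q
  induction q with
  | zero => simp
  | add x y hx hy => simp only [map_add, hx, hy, mul_add]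
  | tmul u w => simp

/-- If `(aᵢ, bᵢ)` is a dual basis of `P` and `(wⱼ)` a basis of `W`, the maps `tensorCoord` and the
vectors `bᵢ ⊗ wⱼ` form a dual basis of `P ⊗ W`. -/
theorem tensorCoord_dualBasis {P : Type} [AddCommGroup P] [Module k P] [Module (H α) P]
    [IsScalarTower k (H α) P] (h0 : t = α * β) (h : α = t * β') (hβ : β = β'⁻¹)
    {ι κ : Type} [Fintype ι] [Fintype κ]
    {a : ι → P →ₗ[H α] H α} {b : ι → P} (hab : ∀ p, ∑ i, a i p • b i = p)
    (w : Module.Basis κ k W) (z : P ⊗[k] W) :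
    ∑ ij : ι × κ, tensorAct P W (D.cop h0 (D.tensorCoord h hβ (a ij.1) (w.coord ij.2) z))
      (b ij.1 ⊗ₜ[k] w ij.2) = z := by
  have e1 : ∀ (i : ι) (x : H t) (v : W), tensorAct P W (D.cop h0 x) (b i ⊗ₜ[k] v)
      = TensorProduct.map ((LinearMap.toSpanSingleton (H α) P (b i)).restrictScalars k)
          LinearMap.id (D.twist W h0 (x ⊗ₜ v)) := by
    intro i x v
    rw [twist_eq_act, tensorAct_map]
    simp
  have e2 : ∀ q : H t ⊗[k] W, ∑ j, (TensorProduct.rid k (H t)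
      (TensorProduct.map LinearMap.id (w.coord j) q)) ⊗ₜ[k] w j = q := by
    intro q
    induction q with
    | zero => simp
    | add x y hx hy =>
      simp only [map_add, TensorProduct.add_tmul, Finset.sum_add_distrib, hx, hy]
    | tmul u v =>
      simp only [TensorProduct.map_tmul, TensorProduct.rid_tmul, LinearMap.id_apply,
        TensorProduct.smul_tmul, ← TensorProduct.tmul_sum, Module.Basis.coord_apply, w.sum_repr]
  rw [Fintype.sum_prod_type]
  have e3 : ∀ i, ∑ j, tensorAct P W (D.cop h0 (D.tensorCoord h hβ (a i) (w.coord j) z))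
      (b i ⊗ₜ[k] w j)
      = TensorProduct.map ((LinearMap.toSpanSingleton (H α) P (b i)).restrictScalars k)
          LinearMap.id (TensorProduct.map ((a i).restrictScalars k) LinearMap.id z) := by
    intro i
    simp only [e1, ← map_sum, tensorCoord, LinearMap.comp_apply, LinearEquiv.coe_coe]
    rw [e2, twist_untwist]
  simp only [e3]
  clear e3
  induction z with
  | zero => simp
  | add x y hx hy => simp only [map_add, Finset.sum_add_distrib, hx, hy]
  | tmul p v =>
    simp only [TensorProduct.map_tmul, LinearMap.id_apply, LinearMap.restrictScalars_apply,
      LinearMap.toSpanSingleton_apply, ← TensorProduct.sum_tmul, hab]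

variable {D}

/-- The partial trace property on the level of coordinates: the symmetrised integral of a
coordinate on `P ⊗ W` is that of `a`, applied after contracting `W` with `φ(g_β ·)`. -/
theorem symmetrised_tensorCoord {g : ∀ γ : G, (H γ)ˣ} (hg : D.IsPivot g)
    {μ : ∀ γ : G, H γ →ₗ[k] k} (hμ : D.IsRightIntegral μ)
    {P : Type} [AddCommGroup P] [Module k P] [Module (H α) P]
    [IsScalarTower k (H α) P] (h : α = t * β') (hβ : β = β'⁻¹)
    (a : P →ₗ[H α] H α) (φ : W →ₗ[k] k) (z : P ⊗[k] W) :
    μ t ((g t : H t) * D.tensorCoord h hβ a φ z)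
      = μ α ((g α : H α) * a (TensorProduct.rid k P (TensorProduct.map LinearMap.id
          (φ ∘ₗ Algebra.lsmul k k W (g β : H β)) z))) := by
  induction z with
  | zero => simp
  | add x y hx hy => simp only [map_add, mul_add, hx, hy]
  | tmul p w =>
    have e : ∀ q : H t ⊗[k] H β',
        μ t ((g t : H t) * TensorProduct.rid k (H t) (TensorProduct.map LinearMap.id φ
          (TensorProduct.map LinearMap.id
            (((Algebra.lsmul k k W).toLinearMap ∘ₗ D.anti hβ).flip w) q)))
        = φ (TensorProduct.lid k (H β) (TensorProduct.map
            (μ t ∘ₗ LinearMap.mulLeft k (g t : H t)) (D.anti hβ) q) • w) := by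
      intro q
      induction q with
      | zero => simp
      | add x y hx hy => simp only [map_add, mul_add, add_smul, hx, hy]
      | tmul u v => simp [mul_comm]
    simp only [tensorCoord, LinearMap.comp_apply, TensorProduct.map_tmul, LinearEquiv.coe_coe,
      LinearMap.id_apply, LinearMap.restrictScalars_apply, untwist_tmul]
    rw [e, symmetrised_cop hg hμ]
    simp only [Algebra.lsmul_coe, TensorProduct.rid_tmul, LinearMap.map_smul_of_tower,
      mul_smul_comm, smul_assoc, map_smul, smul_eq_mul]
    exact mul_comm _ _

end Untwist

/-- The partial trace in coordinates, for the basis of `W` that defines `coevaluation`. -/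
theorem trR_apply {β : G} {P W : Type}
    [AddCommGroup P] [Module k P]
    [AddCommGroup W] [Module k W] [Module (H β) W] [IsScalarTower k (H β) W]
    [FiniteDimensional k W]
    (gβ : H β) (f : (P ⊗[k] W) →ₗ[k] (P ⊗[k] W)) (p : P) :
    trR β P W gβ f p = ∑ j, TensorProduct.rid k P (TensorProduct.map LinearMap.id
      ((Module.Basis.ofVectorSpace k W).coord j ∘ₗ Algebra.lsmul k k W gβ)
      (f (p ⊗ₜ Module.Basis.ofVectorSpace k W j))) := by
  have e : ∀ (j : Module.Basis.ofVectorSpaceIndex k W) (z : P ⊗[k] W),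
      TensorProduct.map LinearMap.id
        (contractRight k W ∘ₗ TensorProduct.map (Algebra.lsmul k k W gβ) LinearMap.id)
        (TensorProduct.assoc k P W (Module.Dual k W)
          (z ⊗ₜ (Module.Basis.ofVectorSpace k W).coord j))
      = TensorProduct.map LinearMap.id
          ((Module.Basis.ofVectorSpace k W).coord j ∘ₗ Algebra.lsmul k k W gβ) z := by
    intro j z
    induction z with
    | zero => simp
    | add x y hx hy => simp only [map_add, TensorProduct.add_tmul, hx, hy]
    | tmul u v => simp
  simp only [trR, LinearMap.comp_apply, LinearEquiv.coe_coe, TensorProduct.rid_symm_apply,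
    TensorProduct.map_tmul, coevaluation_apply_one, TensorProduct.tmul_sum, map_sum,
    TensorProduct.assoc_symm_tmul, LinearMap.id_apply]
  exact Finset.sum_congr rfl fun j _ => congrArg _ (e j _)

end TensorDualBasis

end HopfGCoalgebra

open HopfGCoalgebra in
/-- For a finite type unimodular pivotal Hopf `G`-coalgebra with a right `G`-integral `μ`,
there exists a unique right modified trace `t` on `H`-pmod with
`t_{H_α}(f) = μ̃_α(f(1_α)) = μ_α(g_α f(1_α))`. -/
theorem exists_unique_right_modified_trace
    {k G : Type} [Field k] [Group G] {H : G → Type}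
    [∀ γ : G, Ring (H γ)] [∀ γ : G, Algebra k (H γ)] [∀ γ : G, FiniteDimensional k (H γ)]
    (D : HopfGCoalgebra k G H) (g : ∀ γ : G, (H γ)ˣ) (hpiv : D.IsPivot g)
    (huni : D.IsUnimodular)
    (μ : ∀ γ : G, H γ →ₗ[k] k) (hμ : D.IsRightIntegral μ) :
    ∃! t : TraceData k G H,
      D.IsRightModifiedTrace g t ∧
      ∀ (γ : G) (f : H γ →ₗ[H γ] H γ),
        t γ (H γ) f = μ γ ((g γ : H γ) * f 1) := by
  have hτ : ∀ (γ : G) (x y : H γ), (μ γ ∘ₗ LinearMap.mulLeft k (g γ : H γ)) (x * y)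
      = (μ γ ∘ₗ LinearMap.mulLeft k (g γ : H γ)) (y * x) :=
    fun γ x y => symmetrised_comm hpiv huni hμ γ x y
  refine ⟨fun γ P _ _ _ _ _ _ => projTrace (μ γ ∘ₗ LinearMap.mulLeft k (g γ : H γ)) P,
    ⟨⟨?_, ?_⟩, ?_⟩, ?_⟩
  · intro γ P Q _ _ _ _ _ _ _ _ _ _ _ _ f f'
    exact projTrace_comm (hτ γ) f f'
  · intro α β P W _ _ _ _ _ _ _ _ _ _ _
    letI := D.tensorModule α β (α * β) rfl P W
    haveI := D.tensorModuleTower α β (α * β) rfl P W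
    intro _ f f' hf
    obtain ⟨n, a, b, hab⟩ := exists_dualBasis k (H α) P
    have h : α = α * β * β⁻¹ := by group
    have hβ : β = β⁻¹⁻¹ := (inv_inv β).symm
    let w := Module.Basis.ofVectorSpace k W
    let A : Fin n × Module.Basis.ofVectorSpaceIndex k W → P ⊗[k] W →ₗ[H (α * β)] H (α * β) :=
      fun ij => { D.tensorCoord h hβ (a ij.1) (w.coord ij.2) with
        map_smul' := fun x z => D.tensorCoord_act rfl h hβ (a ij.1) (w.coord ij.2) x z }
    have hAB : ∀ z, ∑ ij, A ij z • (b ij.1 ⊗ₜ[k] w ij.2) = z :=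
      fun z => D.tensorCoord_dualBasis rfl h hβ hab w z
    rw [projTrace_eq (hτ (α * β)) hAB, projTrace_eq (hτ α) hab, Fintype.sum_prod_type]
    refine Finset.sum_congr rfl fun i _ => ?_
    have e : f' (b i) = trR β P W (g β : H β) (f.restrictScalars k) (b i) :=
      LinearMap.congr_fun hf (b i)
    rw [e, trR_apply, map_sum, map_sum]
    exact Finset.sum_congr rfl fun j _ =>
      symmetrised_tensorCoord hpiv hμ h hβ (a i) (w.coord j) (f (b i ⊗ₜ[k] w j))
  · intro γ f
    -- `1` with the identity is a dual basis of the regular module.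
    have h1 : ∀ p : H γ, ∑ _i : Unit, (LinearMap.id : H γ →ₗ[H γ] H γ) p • (1 : H γ) = p := by
      simp
    rw [projTrace_eq (hτ γ) h1]
    simp
  · rintro t ⟨⟨hcyc, -⟩, hreg⟩
    funext γ P _ _ _ _ _ _
    ext f
    obtain ⟨n, a, b, hab⟩ := exists_dualBasis k (H γ) P
    rw [projTrace_eq (hτ γ) hab]
    -- `f` factors through copies of the regular module, where `t` is prescribed.
    have e : f = ∑ i, (f.comp (LinearMap.toSpanSingleton (H γ) P (b i))).comp (a i) := by
      ext p
      conv_lhs => rw [← hab p]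
      simp [LinearMap.sum_apply]
    conv_lhs => rw [e]
    rw [map_sum]
    refine Finset.sum_congr rfl fun i _ => ?_
    rw [hcyc γ P (H γ), hreg]
    simp
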